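/- Let Ψ be a parse tree all of whose nodes are green (the strong invariant), and let Δ(Ψ) be the parse tree obtained from Ψ by replacing some leaf by a new inner node v having two leaf children (as effected on the formula by an insertion update — leaf insertion or subdivision — of the represented tree). Then Δ(Ψ) contains no red node, and every yellow node of Δ(Ψ) lies on lp⁻¹(v); in particular Δ(Ψ) satisfies the weak invariant. -/

import Mathlib

/-! ### Parse trees

A parse tree is a finite binary tree in which every inner node has exactly
two children.  Nodes of a parse tree are identified either with the subtree
rooted at them, or with the path (list of booleans, `false` = left,
`true` = right) leading to them from the root. -/

inductive PTree : Type
  | leaf : PTree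
  | node : PTree → PTree → PTree

namespace PTree

/-- The height of a parse tree: the maximal number of nodes on a path from
the root to a leaf (a leaf has height 1). -/
def height : PTree → ℕ
  | leaf => 1
  | node l r => 1 + max l.height r.height

/-- The number of leaves `‖Ψ‖` of a parse tree. -/
def leaves : PTree → ℕ
  | leaf => 1
  | node l r => l.leaves + r.leaves

/-- `balance(v)`: height of the right subtree minus height of the left
subtree (0 for a leaf). -/
def bal : PTree → ℤ
  | leaf => 0
  | node l r => (r.height : ℤ) - (l.height : ℤ)

/-- The absolute balance `|balance(v)|`. -/
def abal (t : PTree) : ℤ := |t.bal|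

/-- `B(Ψ)`: the sum of the absolute balances of all (inner) nodes. -/
def totalBal : PTree → ℤ
  | leaf => 0
  | node l r => |(r.height : ℤ) - (l.height : ℤ)| + l.totalBal + r.totalBal

def isLeaf : PTree → Prop
  | leaf => True
  | node _ _ => False

/-- A node is *green* if `height(Ψ_v) ≤ 10·log₂‖Ψ_v‖` (leaves are green by
convention). -/
def Green (t : PTree) : Prop :=
  t.isLeaf ∨ (t.height : ℝ) ≤ 10 * Real.logb 2 (t.leaves : ℝ)

/-- A node is *yellow* if `height(Ψ_v) − 1 ≤ 10·log₂‖Ψ_v‖ < height(Ψ_v)`. -/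
def Yellow (t : PTree) : Prop :=
  ¬ t.isLeaf ∧ 10 * Real.logb 2 (t.leaves : ℝ) < (t.height : ℝ) ∧
    (t.height : ℝ) - 1 ≤ 10 * Real.logb 2 (t.leaves : ℝ)

/-- A node is *red* if it is neither green nor yellow. -/
def Red (t : PTree) : Prop := ¬ t.Green ∧ ¬ t.Yellow

/-- `IsSubtree t s`: `t` is the subtree of `s` rooted at some node of `s`. -/
inductive IsSubtree : PTree → PTree → Prop
  | refl (t : PTree) : IsSubtree t t
  | left {t l r : PTree} : IsSubtree t l → IsSubtree t (node l r)
  | right {t l r : PTree} : IsSubtree t r → IsSubtree t (node l r)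

/-- The subtree rooted at the node reached by following the path `p`
(`false` = left child, `true` = right child), if it exists. -/
def subtreeAt : PTree → List Bool → Option PTree
  | t, [] => some t
  | leaf, _ :: _ => none
  | node l _, false :: p => subtreeAt l p
  | node _ r, true :: p => subtreeAt r p

/-- Replace the subtree at path `p` by `s`. -/
def replaceAt : PTree → List Bool → PTree → PTree
  | _, [], s => s
  | leaf, _ :: _, _ => leaf
  | node l r, false :: p, s => node (replaceAt l p s) r
  | node l r, true :: p, s => node l (replaceAt r p s)

/-- `onLongPath t p`: the node of `t` reached by the path `p` lies on the
long path `lp(root of t)`.  The long path of `v` is `v` itself if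
`balance(v) = 0` (in particular if `v` is a leaf) and otherwise continues
into the strictly deeper subtree. -/
def onLongPath : PTree → List Bool → Prop
  | _, [] => True
  | leaf, _ :: _ => False
  | node l r, false :: p => r.height < l.height ∧ onLongPath l p
  | node l r, true :: p => l.height < r.height ∧ onLongPath r p

/-- The long path `lp(v)` of (the subtree rooted at) `v`, as the list of the
subtrees rooted at its nodes. -/
def lpList : PTree → List PTree
  | leaf => [leaf]
  | node l r =>
    if l.height = r.height then [node l r]
    else if l.height < r.height then node l r :: lpList r
    else node l r :: lpList l

/-- `IsComb t a b` : `t` is an inner node whose two subtrees are `a` and `b`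
(in either order). -/
def IsComb (t a b : PTree) : Prop := t = node a b ∨ t = node b a

end PTree

namespace PTree

theorem leaves_pos : ∀ t : PTree, 1 ≤ t.leaves
  | leaf => le_refl _
  | node l r => by
    have := leaves_pos l
    simp only [leaves]; omega

/-- Effect of an insertion on leaves, height and long paths. -/
theorem insert_facts (q : List Bool) : ∀ s : PTree, s.subtreeAt q = some leaf →
    (s.replaceAt q (node leaf leaf)).leaves = s.leaves + 1 ∧
    s.height ≤ (s.replaceAt q (node leaf leaf)).height ∧
    (s.replaceAt q (node leaf leaf)).height ≤ s.height + 1 ∧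
    ((s.replaceAt q (node leaf leaf)).height = s.height + 1 →
      onLongPath (s.replaceAt q (node leaf leaf)) q) := by
  induction q with
  | nil =>
    intro s hs
    simp only [subtreeAt, Option.some.injEq] at hs
    subst hs
    simp [replaceAt, leaves, height, onLongPath]
  | cons b q ih =>
    intro s hs
    cases s with
    | leaf => simp [subtreeAt] at hs
    | node l r =>
      cases b with
      | false =>
        obtain ⟨h1, h2, h3, h4⟩ := ih l hs
        simp only [replaceAt, leaves, height, onLongPath]
        refine ⟨by omega, by omega, by omega, fun h => ⟨by omega, h4 (by omega)⟩⟩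
      | true =>
        obtain ⟨h1, h2, h3, h4⟩ := ih r hs
        simp only [replaceAt, leaves, height, onLongPath]
        refine ⟨by omega, by omega, by omega, fun h => ⟨by omega, h4 (by omega)⟩⟩

theorem isSubtree_of_subtreeAt (p : List Bool) : ∀ s t : PTree,
    s.subtreeAt p = some t → IsSubtree t s := by
  induction p with
  | nil =>
    intro s t h
    simp only [subtreeAt, Option.some.injEq] at h
    subst h; exact .refl _
  | cons b p ih =>
    intro s t h
    cases s with
    | leaf => simp [subtreeAt] at h
    | node l r =>
      cases b with
      | false => exact .left (ih l t h)
      | true => exact .right (ih r t h)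

/-- Classification of the nodes after an insertion. -/
theorem insert_nodes (q : List Bool) : ∀ (s : PTree) (p : List Bool) (t : PTree),
    s.subtreeAt q = some leaf →
    (s.replaceAt q (node leaf leaf)).subtreeAt p = some t →
    t = leaf ∨ IsSubtree t s ∨ (p <+: q ∧ ∃ u, IsSubtree u s ∧
      u.subtreeAt (q.drop p.length) = some leaf ∧
      t = u.replaceAt (q.drop p.length) (node leaf leaf)) := by
  induction q with
  | nil =>
    intro s p t hs ht
    match p, ht with
    | [], ht =>
      simp only [subtreeAt, Option.some.injEq] at ht
      exact .inr (.inr ⟨List.prefix_rfl, s, .refl _, hs, ht.symm⟩)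
    | [false], ht => simp [replaceAt, subtreeAt] at ht; exact .inl ht.symm
    | [true], ht => simp [replaceAt, subtreeAt] at ht; exact .inl ht.symm
    | false :: _ :: _, ht => simp [replaceAt, subtreeAt] at ht
    | true :: _ :: _, ht => simp [replaceAt, subtreeAt] at ht
  | cons b q ih =>
    intro s p t hs ht
    cases p with
    | nil =>
      simp only [subtreeAt, Option.some.injEq] at ht
      exact .inr (.inr ⟨List.nil_prefix, s, .refl _, hs, ht.symm⟩)
    | cons c p =>
      cases s with
      | leaf => simp [subtreeAt] at hs
      | node l r =>
        cases b <;> cases c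
        · rcases ih l p t hs ht with h | h | ⟨h, u, hu, h'⟩
          · exact .inl h
          · exact .inr (.inl (.left h))
          · exact .inr (.inr ⟨by simpa using h, u, .left hu, h'⟩)
        · exact .inr (.inl (.right (isSubtree_of_subtreeAt p r t ht)))
        · exact .inr (.inl (.left (isSubtree_of_subtreeAt p l t ht)))
        · rcases ih r p t hs ht with h | h | ⟨h, u, hu, h'⟩
          · exact .inl h
          · exact .inr (.inl (.right h))
          · exact .inr (.inr ⟨by simpa using h, u, .right hu, h'⟩)

theorem not_yellow_of_green {t : PTree} (h : t.Green) : ¬ t.Yellow := by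
  rintro ⟨h1, h2, _⟩
  rcases h with h | h
  · exact h1 h
  · exact absurd h2 (not_lt.mpr h)

/-- Colour of a node whose subtree received the insertion. -/
theorem insert_colour (q : List Bool) (u : PTree) (hu : u.subtreeAt q = some leaf)
    (hg : u.Green) :
    (u.replaceAt q (node leaf leaf)).Green ∨
    ((u.replaceAt q (node leaf leaf)).Yellow ∧
      (u.replaceAt q (node leaf leaf)).height = u.height + 1) := by
  obtain ⟨h1, h2, h3, -⟩ := insert_facts q u hu
  cases u with
  | leaf =>
    cases q with
    | nil =>
      left; right
      norm_num [replaceAt, height, leaves]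
    | cons b q => simp [subtreeAt] at hu
  | node l r =>
    have hb : ((node l r).height : ℝ) ≤ 10 * Real.logb 2 ((node l r).leaves : ℝ) := by
      rcases hg with h | h
      · exact h.elim
      · exact h
    have hpos := leaves_pos (node l r)
    have hlog : Real.logb 2 ((node l r).leaves : ℝ) ≤
        Real.logb 2 (((node l r).replaceAt q (node leaf leaf)).leaves : ℝ) := by
      apply Real.logb_le_logb_of_le (by norm_num)
      · exact_mod_cast hpos
      · rw [h1]; push_cast; linarith
    by_cases hG : ((node l r).replaceAt q (node leaf leaf)).Green
    · exact .inl hG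
    · right
      have hnl : ¬ ((node l r).replaceAt q (node leaf leaf)).isLeaf := fun h => hG (.inl h)
      have hlt := not_le.mp (fun h => hG (.inr h))
      have h3' : (((node l r).replaceAt q (node leaf leaf)).height : ℝ) ≤
          ((node l r).height : ℝ) + 1 := by exact_mod_cast h3
      refine ⟨⟨hnl, hlt, by linarith⟩, ?_⟩
      by_contra hne
      have h4 : ((node l r).replaceAt q (node leaf leaf)).height ≤ (node l r).height := by omega
      have h4' : (((node l r).replaceAt q (node leaf leaf)).height : ℝ) ≤
          ((node l r).height : ℝ) := by exact_mod_cast h4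
      linarith

end PTree

/-- Let `Ψ` be a parse tree all of whose nodes are green
(the strong invariant), and let `Δ(Ψ)` be obtained from `Ψ` by replacing the
leaf at path `q` by a new inner node `v` with two leaf children (the effect
of an insertion update on the formula).  Then `Δ(Ψ)` contains no red node,
and every yellow node of `Δ(Ψ)` lies on `lp⁻¹(v)`; in particular `Δ(Ψ)`
satisfies the weak invariant. -/
theorem insertion_preserves_weak_invariant
    (Ψ : PTree) (q : List Bool)
    (hleaf : Ψ.subtreeAt q = some PTree.leaf)
    (hgreen : ∀ t, PTree.IsSubtree t Ψ → t.Green) :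
    (∀ p t, (Ψ.replaceAt q (.node .leaf .leaf)).subtreeAt p = some t → ¬ t.Red) ∧
    (∀ p t, (Ψ.replaceAt q (.node .leaf .leaf)).subtreeAt p = some t → t.Yellow →
      p <+: q ∧ PTree.onLongPath t (q.drop p.length)) := by
  constructor
  · intro p t ht hr
    rcases PTree.insert_nodes q Ψ p t hleaf ht with h | h | ⟨h, u, hu, hq, rfl⟩
    · subst h; exact hr.1 (.inl trivial)
    · exact hr.1 (hgreen t h)
    · rcases PTree.insert_colour _ u hq (hgreen u hu) with h | h
      · exact hr.1 h
      · exact hr.2 h.1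
  · intro p t ht hy
    rcases PTree.insert_nodes q Ψ p t hleaf ht with h | h | ⟨h, u, hu, hq, rfl⟩
    · subst h; exact absurd hy (PTree.not_yellow_of_green (.inl trivial))
    · exact absurd hy (PTree.not_yellow_of_green (hgreen t h))
    · rcases PTree.insert_colour _ u hq (hgreen u hu) with h' | h'
      · exact absurd hy (PTree.not_yellow_of_green h')
      · exact ⟨h, (PTree.insert_facts _ u hq).2.2.2 h'.2⟩
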